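/- arXiv:1712.04732 — 7 statements merged into one kernel-verified Lean document; each statement's English description precedes it below -/
import Mathlib

section
/- Let R > 0. For every nonzero k ∈ ℝ³, the Fourier transform of the truncated 3D Coulomb Green's function G_R(x) = 1/(4π‖x‖) for ‖x‖ ≤ R (and 0 otherwise) is given by ∫_{x ∈ ℝ³, ‖x‖ ≤ R} (1/(4π‖x‖)) e^{−i⟨k,x⟩} dx = 2 (sin(R‖k‖/2))² / ‖k‖². -/
/-!
Split `ℝ³ = ℝ k ⊕ k^⊥` isometrically, writing `x` as a height `z` along `k / ‖k‖` and a point `w`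
of the plane `k^⊥`. The phase `e^{-i⟨k,x⟩} = e^{-i‖k‖z}` depends on `z` alone, so by Fubini (the
singularity `1/‖x‖` is integrable in dimension three) the integrand may first be integrated over
each plane. Polar coordinates there give, for `0 < |z| ≤ R`,
`2π ∫_0^{√(R² - z²)} ρ / (4π √(z² + ρ²)) dρ = (R - |z|) / 2` (`integral_slice`).
What remains is the one-dimensional Fourier transform of a tent function
(`integral_tent_mul_exp`), which is
`∫_0^R (R - z) cos(‖k‖z) dz = (1 - cos(‖k‖R)) / ‖k‖² = 2 sin²(R‖k‖/2) / ‖k‖²`.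
-/

open MeasureTheory Real
open scoped RealInnerProductSpace

/-- The truncated Green's function as a function of the radius `r = ‖x‖`. -/
noncomputable def truncatedCoulombProfile (R r : ℝ) : ℝ :=
  (Set.Iic R).indicator (fun r => 1 / (4 * π * r)) r

/-- Cylindrical coordinates with axis `k`: the space is split, preserving volume, as the line
spanned by `k` times the plane orthogonal to it. -/
lemma exists_axial_splitting (k : EuclideanSpace ℝ (Fin 3)) :
    ∃ Φ : ℝ × EuclideanSpace ℝ (Fin 2) ≃ᵐ EuclideanSpace ℝ (Fin 3), MeasurePreserving Φ ∧
      ∀ z w, ⟪k, Φ (z, w)⟫ = ‖k‖ * z ∧ ‖Φ (z, w)‖ = √(z ^ 2 + ‖w‖ ^ 2) := by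
  set v : EuclideanSpace ℝ (Fin 3) := EuclideanSpace.single 0 ‖k‖ with hv
  -- The reflection exchanging `‖k‖ e₀` and `k` rotates the first coordinate axis onto `k`.
  set L := (ℝ ∙ (v - k))ᗮ.reflection with hL
  have hLv : L v = k := Submodule.reflection_sub (by simp [hv])
  set Ψ : ℝ × EuclideanSpace ℝ (Fin 2) ≃ᵐ EuclideanSpace ℝ (Fin 3) :=
    (((MeasurableEquiv.refl ℝ).prodCongr (MeasurableEquiv.toLp 2 (Fin 2 → ℝ)).symm).trans
      (MeasurableEquiv.piFinSuccAbove (fun _ : Fin 3 => ℝ) 0).symm).trans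
      (MeasurableEquiv.toLp 2 (Fin 3 → ℝ)) with hΨ
  have hΨm : MeasurePreserving Ψ := by
    have h1 : MeasurePreserving
        ((MeasurableEquiv.refl ℝ).prodCongr (MeasurableEquiv.toLp 2 (Fin 2 → ℝ)).symm)
        volume volume :=
      (MeasurePreserving.id volume).prod
        (EuclideanSpace.volume_preserving_symm_measurableEquiv_toLp (Fin 2))
    have h2 := (volume_preserving_piFinSuccAbove (fun _ : Fin 3 => ℝ) 0).symm
    have h3 := PiLp.volume_preserving_toLp (Fin 3)
    exact h3.comp (h2.comp h1)
  have h0 : ∀ z w, Ψ (z, w) 0 = z := fun z w => rfl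
  have h1 : ∀ z w, Ψ (z, w) 1 = w 0 := fun z w => rfl
  have h2 : ∀ z w, Ψ (z, w) 2 = w 1 := fun z w => rfl
  refine ⟨Ψ.trans L.toHomeomorph.toMeasurableEquiv, L.measurePreserving.comp hΨm, fun z w => ?_⟩
  have e : (Ψ.trans L.toHomeomorph.toMeasurableEquiv) (z, w) = L (Ψ (z, w)) := rfl
  rw [e]
  constructor
  · nth_rewrite 1 [← hLv]
    rw [LinearIsometryEquiv.inner_map_map, hv, EuclideanSpace.inner_single_left, h0]
    simp
  · rw [LinearIsometryEquiv.norm_map, EuclideanSpace.norm_eq, EuclideanSpace.norm_sq_eq]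
    simp [Fin.sum_univ_three, h0, h1, h2, add_assoc]

/-- The factor `r²` of the volume element in dimension three absorbs the singularity `1/r`. -/
lemma integrable_truncatedCoulombProfile_norm (R : ℝ) :
    Integrable (fun x : EuclideanSpace ℝ (Fin 3) => truncatedCoulombProfile R ‖x‖) := by
  rw [integrable_fun_norm_addHaar volume (f := truncatedCoulombProfile R)]
  have h : IntegrableOn (fun y : ℝ => y / (4 * π)) (Set.Ioc 0 R) :=
    (Continuous.integrableOn_Icc (by fun_prop)).mono_set Set.Ioc_subset_Icc_self
  have h' := (integrable_indicator_iff measurableSet_Ioc).2 h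
  refine (h'.integrableOn (s := Set.Ioi 0)).congr_fun ?_ measurableSet_Ioi
  intro y (hy : 0 < y)
  by_cases hyR : y ≤ R
  · simp [truncatedCoulombProfile, Set.indicator, hy, hyR]
    field_simp
  · simp [truncatedCoulombProfile, Set.indicator, hyR]

/-- The integral of the truncated Green's function over the plane at height `z`; in polar
coordinates of the plane, `ρ / √(z² + ρ²)` is the derivative of `√(z² + ρ²)`. -/
lemma integral_slice {R z : ℝ} (hR : 0 < R) (hz : z ≠ 0) :
    ∫ w : EuclideanSpace ℝ (Fin 2), truncatedCoulombProfile R √(z ^ 2 + ‖w‖ ^ 2) =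
      (Set.Ioc (-R) R).indicator (fun z => (R - |z|) / 2) z := by
  rw [integral_fun_norm_addHaar volume
    (fun y => truncatedCoulombProfile R √(z ^ 2 + y ^ 2))]
  have hvol : (volume : Measure (EuclideanSpace ℝ (Fin 2))).real (Metric.ball 0 1) = π := by
    simp [Measure.real, EuclideanSpace.volume_ball_fin_two, pi_pos.le]
  rw [hvol]
  simp only [finrank_euclideanSpace, Fintype.card_fin, Nat.add_one_sub_one, pow_one, smul_eq_mul,
    nsmul_eq_mul, Nat.cast_ofNat]
  have hpos : ∀ y : ℝ, 0 < z ^ 2 + y ^ 2 := fun y => by positivity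
  by_cases hzR : |z| ≤ R
  · have hz2 : z ^ 2 ≤ R ^ 2 := sq_le_sq.2 (by rwa [abs_of_pos hR])
    set S := √(R ^ 2 - z ^ 2) with hS
    have hS2 : S ^ 2 = R ^ 2 - z ^ 2 := Real.sq_sqrt (by linarith)
    have hS0 : 0 ≤ S := Real.sqrt_nonneg _
    have key : ∫ y in Set.Ioi (0 : ℝ), y * truncatedCoulombProfile R √(z ^ 2 + y ^ 2) =
        ∫ y in (0 : ℝ)..S, y / (4 * π * √(z ^ 2 + y ^ 2)) := by
      rw [intervalIntegral.integral_of_le hS0, ← integral_indicator measurableSet_Ioi,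
        ← integral_indicator measurableSet_Ioc]
      congr 1
      ext y
      by_cases hy : 0 < y
      · have hiff : √(z ^ 2 + y ^ 2) ≤ R ↔ y ≤ S := by
          rw [Real.sqrt_le_left hR.le, hS, Real.le_sqrt' hy]
          constructor <;> intro h <;> linarith
        by_cases hyS : y ≤ S
        · simp [truncatedCoulombProfile, Set.indicator, hy, hiff, hyS]
          field_simp
        · simp [truncatedCoulombProfile, Set.indicator, hy, hiff, hyS]
      · simp [Set.indicator, hy]
    have hd : ∀ y ∈ Set.uIcc 0 S, HasDerivAt (fun y => √(z ^ 2 + y ^ 2) / (4 * π))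
        (y / (4 * π * √(z ^ 2 + y ^ 2))) y := by
      intro y _
      have h1 : HasDerivAt (fun y : ℝ => z ^ 2 + y ^ 2) (2 * y) y := by
        simpa using ((hasDerivAt_id y).pow 2).const_add (z ^ 2)
      refine ((h1.sqrt (hpos y).ne').div_const (4 * π)).congr_deriv ?_
      field_simp
    have hc : Continuous fun y : ℝ => y / (4 * π * √(z ^ 2 + y ^ 2)) := by
      refine continuous_id.div (by fun_prop) fun y => ?_
      have := Real.sqrt_pos.2 (hpos y)
      positivity
    rw [key, intervalIntegral.integral_eq_sub_of_hasDerivAt hd (hc.intervalIntegrable _ _)]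
    have e1 : √(z ^ 2 + S ^ 2) = R := by
      rw [hS2, add_sub_cancel, Real.sqrt_sq hR.le]
    have e2 : √(z ^ 2 + 0 ^ 2) = |z| := by simp [Real.sqrt_sq_eq_abs]
    rw [e1, e2]
    by_cases hm : z ∈ Set.Ioc (-R) R
    · rw [Set.indicator_of_mem hm]
      field_simp
      ring
    · -- The height `z = -R` lies outside the half-open interval, but there `R - |z| = 0`.
      have hzR' : z = -R := by
        have := abs_le.1 hzR
        by_contra hne
        exact hm ⟨lt_of_le_of_ne this.1 (Ne.symm hne), this.2⟩
      rw [Set.indicator_of_notMem hm, hzR', abs_neg, abs_of_pos hR]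
      simp
  · have hm : z ∉ Set.Ioc (-R) R := fun h => hzR (abs_le.2 ⟨h.1.le, h.2⟩)
    rw [Set.indicator_of_notMem hm]
    have : ∀ y, truncatedCoulombProfile R √(z ^ 2 + y ^ 2) = 0 := by
      intro y
      have hlt : R < √(z ^ 2 + y ^ 2) := by
        refine (not_le.1 hzR).trans_le (Real.abs_le_sqrt ?_)
        nlinarith [sq_nonneg y]
      simp [truncatedCoulombProfile, hlt]
    simp [this]

/-- The Fourier transform of the tent function `(R - |z|)/2` on `[-R, R]`. -/
lemma integral_tent_mul_exp {R κ : ℝ} (hR : 0 < R) (hκ : κ ≠ 0) :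
    ∫ z in (-R)..R, (((R - |z|) / 2 : ℝ) : ℂ) * Complex.exp (-Complex.I * ((κ * z : ℝ) : ℂ)) =
      ((2 * (Real.sin (R * κ / 2)) ^ 2 / κ ^ 2 : ℝ) : ℂ) := by
  set h : ℝ → ℂ := fun z =>
    (((R - |z|) / 2 : ℝ) : ℂ) * Complex.exp (-Complex.I * ((κ * z : ℝ) : ℂ)) with hh
  have hc : Continuous h := by fun_prop
  have hi : ∀ a b, IntervalIntegrable h volume a b := fun a b => hc.intervalIntegrable a b
  have hneg : ∫ z in (-R)..0, h z = ∫ z in (0 : ℝ)..R, h (-z) := by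
    rw [intervalIntegral.integral_comp_neg, neg_zero]
  have hcn : Continuous fun z => h (-z) := hc.comp continuous_neg
  rw [← intervalIntegral.integral_add_adjacent_intervals (hi (-R) 0) (hi 0 R), hneg,
    ← intervalIntegral.integral_add (hcn.intervalIntegrable _ _) (hi _ _)]
  -- The two halves are complex conjugate and combine into a cosine.
  have hcos : ∫ z in (0 : ℝ)..R, (h (-z) + h z) =
      ∫ z in (0 : ℝ)..R, (((R - z) * Real.cos (κ * z) : ℝ) : ℂ) := by
    refine intervalIntegral.integral_congr fun z hz => ?_
    rw [Set.uIcc_of_le hR.le] at hz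
    simp only [hh, abs_neg, abs_of_nonneg hz.1]
    push_cast
    rw [Complex.cos]
    ring_nf
  have hd : ∀ z ∈ Set.uIcc 0 R,
      HasDerivAt (fun z => (R - z) * Real.sin (κ * z) / κ - Real.cos (κ * z) / κ ^ 2)
        ((R - z) * Real.cos (κ * z)) z := by
    intro z _
    have hl : HasDerivAt (fun z : ℝ => κ * z) κ z := by
      simpa using (hasDerivAt_id z).const_mul κ
    have h1 := ((((hasDerivAt_id z).const_sub R).mul hl.sin).div_const κ).sub
      (hl.cos.div_const (κ ^ 2))
    refine h1.congr_deriv ?_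
    simp only [id]
    field_simp
    ring
  rw [hcos, intervalIntegral.integral_ofReal,
    intervalIntegral.integral_eq_sub_of_hasDerivAt hd
      (Continuous.intervalIntegrable (by fun_prop) _ _)]
  congr 1
  have h2 : Real.cos (κ * R) = 1 - 2 * Real.sin (R * κ / 2) ^ 2 := by
    rw [← Real.cos_sq_add_sin_sq (R * κ / 2), show κ * R = 2 * (R * κ / 2) by ring,
      Real.cos_two_mul']
    ring
  simp only [h2, mul_zero, Real.sin_zero, Real.cos_zero]
  field_simp
  ring

/-- The Fourier transform of the truncated 3D Coulomb Green's function
`G_R(x) = 1/(4π‖x‖)` for `‖x‖ ≤ R` equals `2 (sin(R‖k‖/2))² / ‖k‖²` for `k ≠ 0`. -/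
theorem fourier_transform_truncated_coulomb_3d
    (R : ℝ) (hR : 0 < R) (k : EuclideanSpace ℝ (Fin 3)) (hk : k ≠ 0) :
    ∫ x in Metric.closedBall (0 : EuclideanSpace ℝ (Fin 3)) R,
        ((1 / (4 * π * ‖x‖) : ℝ) : ℂ) * Complex.exp (-Complex.I * (⟪k, x⟫ : ℝ)) =
      ((2 * (Real.sin (R * ‖k‖ / 2)) ^ 2 / ‖k‖ ^ 2 : ℝ) : ℂ) := by
  obtain ⟨Φ, hΦ, hΦk⟩ := exists_axial_splitting k
  set F : EuclideanSpace ℝ (Fin 3) → ℂ := fun x =>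
    (truncatedCoulombProfile R ‖x‖ : ℂ) * Complex.exp (-Complex.I * (⟪k, x⟫ : ℝ)) with hF
  have hFint : Integrable F := by
    refine (integrable_truncatedCoulombProfile_norm R).ofReal.mul_bdd (c := 1)
      (Continuous.aestronglyMeasurable (by fun_prop)) (.of_forall fun x => ?_)
    rw [show -Complex.I * ((⟪k, x⟫ : ℝ) : ℂ) = ((-⟪k, x⟫ : ℝ) : ℂ) * Complex.I by
      push_cast; ring, Complex.norm_exp_ofReal_mul_I]
  have hball : ∫ x in Metric.closedBall (0 : EuclideanSpace ℝ (Fin 3)) R,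
      ((1 / (4 * π * ‖x‖) : ℝ) : ℂ) * Complex.exp (-Complex.I * (⟪k, x⟫ : ℝ)) = ∫ x, F x := by
    rw [← integral_indicator Metric.isClosed_closedBall.measurableSet]
    congr 1
    ext x
    by_cases hx : ‖x‖ ≤ R <;> simp [hF, truncatedCoulombProfile, Set.indicator, hx]
  have hprod : Integrable (F ∘ Φ) (volume.prod volume) :=
    (hΦ.integrable_comp_emb Φ.measurableEmbedding).2 hFint
  rw [hball, ← hΦ.integral_comp Φ.measurableEmbedding F]
  have hfub := integral_prod (F ∘ Φ) hprod
  simp only [Function.comp_apply] at hfub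
  rw [Measure.volume_eq_prod, hfub, ← integral_tent_mul_exp hR (norm_ne_zero_iff.2 hk),
    intervalIntegral.integral_of_le (by linarith), ← integral_indicator measurableSet_Ioc]
  refine integral_congr_ae ?_
  filter_upwards [Measure.ae_ne volume (0 : ℝ)] with z hz
  simp only [hF, (hΦk _ _).1, (hΦk _ _).2]
  rw [integral_mul_const, integral_complex_ofReal, integral_slice hR hz]
  by_cases hm : z ∈ Set.Ioc (-R) R
  · rw [Set.indicator_of_mem hm, Set.indicator_of_mem hm]
  · rw [Set.indicator_of_notMem hm, Set.indicator_of_notMem hm]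
    simp
end

section
/- Let R > 0. For every nonzero κ ∈ ℝ², the Fourier transform of the truncated 2D Green's function G_R(x) = −(1/(2π)) log‖x‖ for ‖x‖ ≤ R (and 0 otherwise) is given by ∫_{x ∈ ℝ², ‖x‖ ≤ R} (−(1/(2π)) log‖x‖) e^{−i⟨κ,x⟩} dx = (1 − J₀(R‖κ‖))/‖κ‖² − R·log(R)·J₁(R‖κ‖)/‖κ‖. -/
/-!
In polar coordinates, the angular integral of the plane wave `e^{-i⟨κ,x⟩}` over the circle of
radius `r` is `2π J₀(‖κ‖ r)` (`integral_exp_cos_eq_besselJ0`), so the transform reduces to the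
radial integral `∫₀ᴿ -r log r J₀(‖κ‖ r) dr`. The identities `J₀' = -J₁` and `(x J₁)' = x J₀`
(`hasDerivAt_besselJ0`, `hasDerivAt_mul_besselJ1`) show that
`-(r log r) J₁(kr)/k - J₀(kr)/k²` is an antiderivative of the integrand for `k = ‖κ‖`. It extends
continuously to `r = 0`, with value `-1/k²` there, and the fundamental theorem of calculus gives
the formula (`integral_log_mul_besselJ0`).
-/

open MeasureTheory Real
open scoped RealInnerProductSpace

/-- The Bessel function of the first kind of order zero,
`J₀(x) = (1/π) ∫_0^π cos(x sin θ) dθ`. -/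
noncomputable def besselJ0 (x : ℝ) : ℝ :=
  (1 / π) * ∫ θ in (0 : ℝ)..π, Real.cos (x * Real.sin θ)

/-- The Bessel function of the first kind of order one,
`J₁(x) = (1/π) ∫_0^π cos(θ - x sin θ) dθ`. -/
noncomputable def besselJ1 (x : ℝ) : ℝ :=
  (1 / π) * ∫ θ in (0 : ℝ)..π, Real.cos (θ - x * Real.sin θ)

/-- Expanding `cos (θ - x sin θ)`, the term `cos θ cos (x sin θ)` is antisymmetric under
`θ ↦ π - θ` and integrates to zero. -/
theorem besselJ1_eq (x : ℝ) :
    besselJ1 x = (1 / π) * ∫ θ in (0 : ℝ)..π, Real.sin θ * Real.sin (x * Real.sin θ) := by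
  have hodd : ∫ θ in (0 : ℝ)..π, Real.cos θ * Real.cos (x * Real.sin θ) = 0 := by
    have h := intervalIntegral.integral_comp_sub_left (a := 0) (b := π)
      (fun θ => Real.cos θ * Real.cos (x * Real.sin θ)) π
    simp only [Real.cos_pi_sub, Real.sin_pi_sub, sub_self, sub_zero, neg_mul,
      intervalIntegral.integral_neg] at h
    linarith
  have hsum : ∫ θ in (0 : ℝ)..π, Real.cos (θ - x * Real.sin θ) =
      (∫ θ in (0 : ℝ)..π, Real.cos θ * Real.cos (x * Real.sin θ)) +
        ∫ θ in (0 : ℝ)..π, Real.sin θ * Real.sin (x * Real.sin θ) := by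
    rw [← intervalIntegral.integral_add]
    · simp only [Real.cos_sub]
    · exact Continuous.intervalIntegrable (by fun_prop) _ _
    · exact Continuous.intervalIntegrable (by fun_prop) _ _
  rw [besselJ1, hsum, hodd, zero_add]

/-- `J₀' = -J₁`, by differentiating under the integral sign. -/
theorem hasDerivAt_besselJ0 (x : ℝ) : HasDerivAt besselJ0 (-besselJ1 x) x := by
  have h := (intervalIntegral.hasDerivAt_integral_of_dominated_loc_of_deriv_le (μ := volume)
    (a := 0) (b := π) (x₀ := x) (s := Set.univ) (bound := fun _ => (1 : ℝ))
    (F := fun y θ => Real.cos (y * Real.sin θ))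
    (F' := fun y θ => -(Real.sin θ * Real.sin (y * Real.sin θ))) Filter.univ_mem
    (.of_forall fun y => Continuous.aestronglyMeasurable (by fun_prop))
    (Continuous.intervalIntegrable (by fun_prop) _ _)
    (Continuous.aestronglyMeasurable (by fun_prop))
    (.of_forall fun θ _ y _ => by
      rw [norm_neg, norm_mul]
      exact mul_le_one₀ (Real.abs_sin_le_one _) (norm_nonneg _) (Real.abs_sin_le_one _))
    (Continuous.intervalIntegrable (by fun_prop) _ _)
    (.of_forall fun θ _ y _ => by
      have h1 := ((hasDerivAt_id y).mul_const (Real.sin θ)).cos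
      simp only [id, one_mul] at h1
      convert! h1 using 1
      ring)).2
  rw [intervalIntegral.integral_neg] at h
  have h2 := h.const_mul (1 / π)
  rw [besselJ1_eq]
  convert! h2 using 1
  ring

/-- The recurrence `(x J₁(x))' = x J₀(x)`, which follows from the integral formula for `J₁'` and
one integration by parts in `θ`. -/
theorem hasDerivAt_mul_besselJ1 (x : ℝ) :
    HasDerivAt (fun y => y * besselJ1 y) (x * besselJ0 x) x := by
  have h := (intervalIntegral.hasDerivAt_integral_of_dominated_loc_of_deriv_le (μ := volume)
    (a := 0) (b := π) (x₀ := x) (s := Set.univ) (bound := fun _ => (1 : ℝ))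
    (F := fun y θ => Real.sin θ * Real.sin (y * Real.sin θ))
    (F' := fun y θ => Real.sin θ ^ 2 * Real.cos (y * Real.sin θ)) Filter.univ_mem
    (.of_forall fun y => Continuous.aestronglyMeasurable (by fun_prop))
    (Continuous.intervalIntegrable (by fun_prop) _ _)
    (Continuous.aestronglyMeasurable (by fun_prop))
    (.of_forall fun θ _ y _ => by
      rw [norm_mul, Real.norm_of_nonneg (sq_nonneg _)]
      exact mul_le_one₀ (Real.sin_sq_le_one _) (norm_nonneg _) (Real.abs_cos_le_one _))
    (Continuous.intervalIntegrable (by fun_prop) _ _)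
    (.of_forall fun θ _ y _ => by
      have h1 := (((hasDerivAt_id y).mul_const (Real.sin θ)).sin).const_mul (Real.sin θ)
      simp only [id, one_mul] at h1
      convert! h1 using 1
      ring)).2
  -- `sin θ sin (x sin θ) - x cos² θ cos (x sin θ)` is the derivative of `-cos θ sin (x sin θ)`,
  -- which vanishes at both end points.
  have hparts : ∫ θ in (0 : ℝ)..π, (Real.sin θ * Real.sin (x * Real.sin θ)
      - x * (Real.cos θ ^ 2 * Real.cos (x * Real.sin θ))) = 0 := by
    rw [intervalIntegral.integral_eq_sub_of_hasDerivAt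
      (f := fun θ => -(Real.cos θ * Real.sin (x * Real.sin θ)))]
    · simp
    · intro θ _
      have h1 := ((Real.hasDerivAt_cos θ).mul ((Real.hasDerivAt_sin θ).const_mul x).sin).neg
      convert! h1 using 1
      ring
    · exact Continuous.intervalIntegrable (by fun_prop) _ _
  have hsplit : ∫ θ in (0 : ℝ)..π, (Real.sin θ * Real.sin (x * Real.sin θ)
      - x * (Real.cos θ ^ 2 * Real.cos (x * Real.sin θ))) =
      (∫ θ in (0 : ℝ)..π, Real.sin θ * Real.sin (x * Real.sin θ)) +
      x * (∫ θ in (0 : ℝ)..π, Real.sin θ ^ 2 * Real.cos (x * Real.sin θ)) -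
      x * ∫ θ in (0 : ℝ)..π, Real.cos (x * Real.sin θ) := by
    rw [← intervalIntegral.integral_const_mul, ← intervalIntegral.integral_const_mul,
      ← intervalIntegral.integral_add, ← intervalIntegral.integral_sub]
    · congr 1
      ext θ
      rw [Real.cos_sq']
      ring
    all_goals exact Continuous.intervalIntegrable (by fun_prop) _ _
  have h2 := (hasDerivAt_id x).mul (h.const_mul (1 / π))
  have h3 : (fun y => y * besselJ1 y) = id * fun y => (1 / π) *
      ∫ θ in (0 : ℝ)..π, Real.sin θ * Real.sin (y * Real.sin θ) := by
    ext y
    simp [besselJ1_eq]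
  rw [h3]
  convert! h2 using 1
  rw [hparts] at hsplit
  simp only [id, one_mul, besselJ0]
  linear_combination (1 / π) * hsplit

theorem besselJ0_zero : besselJ0 0 = 1 := by
  simp [besselJ0, Real.pi_ne_zero]

theorem continuous_besselJ0 : Continuous besselJ0 :=
  continuous_iff_continuousAt.2 fun x => (hasDerivAt_besselJ0 x).continuousAt

theorem continuous_besselJ1 : Continuous besselJ1 := by
  unfold besselJ1
  exact continuous_const.mul
    (intervalIntegral.continuous_parametric_intervalIntegral_of_continuous' (by fun_prop) _ _)

/-- The radial integral. The antiderivative is `-(r log r) J₁(kr)/k - J₀(kr)/k²`, which is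
continuous up to `r = 0`. -/
theorem integral_log_mul_besselJ0 {R k : ℝ} (hR : 0 < R) (hk : k ≠ 0) :
    ∫ r in (0 : ℝ)..R, -(r * Real.log r) * besselJ0 (k * r) =
      (1 - besselJ0 (R * k)) / k ^ 2 - R * Real.log R * besselJ1 (R * k) / k := by
  have hJ0 := continuous_besselJ0
  have hJ1 := continuous_besselJ1
  have hlog := Real.continuous_mul_log
  rw [intervalIntegral.integral_eq_sub_of_hasDerivAt_of_le hR.le
    (f := fun r => -(r * Real.log r) * besselJ1 (k * r) / k - besselJ0 (k * r) / k ^ 2)]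
  · simp only [Real.log_zero, mul_zero, besselJ0_zero, mul_comm k R]
    ring
  · exact Continuous.continuousOn (by fun_prop)
  · intro r hr
    have hr0 : r ≠ 0 := hr.1.ne'
    have hkr : HasDerivAt (fun r : ℝ => k * r) k r := by
      simpa using (hasDerivAt_id r).const_mul k
    have h0 := (hasDerivAt_besselJ0 (k * r)).comp r hkr
    have h1 := (hasDerivAt_mul_besselJ1 (k * r)).comp r hkr
    have h2 := (((Real.hasDerivAt_log hr0).mul h1).neg.div_const (k ^ 2)).sub (h0.div_const (k ^ 2))
    have h3 : (fun r => -(r * Real.log r) * besselJ1 (k * r) / k - besselJ0 (k * r) / k ^ 2) =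
        fun r => -(Real.log r * (k * r * besselJ1 (k * r))) / k ^ 2 - besselJ0 (k * r) / k ^ 2 := by
      ext r
      field_simp
    rw [h3]
    convert! h2 using 1
    simp only [Function.comp_apply]
    field_simp
    ring
  · exact Continuous.intervalIntegrable (by fun_prop) _ _

/-- The angular integral: a plane wave averages over the circle to `J₀`, whatever the
direction `φ` of the wave vector. -/
theorem integral_exp_cos_eq_besselJ0 (z φ : ℝ) :
    ∫ θ in (-π)..π, Complex.exp (-Complex.I * (z * Real.cos (θ - φ) : ℝ)) =
      ((2 * π * besselJ0 z : ℝ) : ℂ) := by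
  set g : ℝ → ℂ := fun θ => Complex.exp (-Complex.I * (z * Real.sin θ : ℝ)) with hg
  have hgc : Continuous g := by fun_prop
  have hper : Function.Periodic g (2 * π) := fun θ => by simp only [hg, Real.sin_add_two_pi]
  have hshift : (fun θ : ℝ => Complex.exp (-Complex.I * (z * Real.cos (θ - φ) : ℝ))) =
      fun θ => g (θ + (π / 2 - φ)) := by
    ext θ
    simp only [hg]
    rw [show θ + (π / 2 - φ) = (θ - φ) + π / 2 by ring, Real.sin_add_pi_div_two]
  -- A full period of `g` may start anywhere, so the rotation by `π / 2 - φ` is harmless.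
  have hrot : ∫ θ in (-π)..π, g (θ + (π / 2 - φ)) = ∫ θ in (-π)..π, g θ := by
    rw [intervalIntegral.integral_comp_add_right]
    have h := hper.intervalIntegral_add_eq (-π + (π / 2 - φ)) (-π)
    convert! h using 2 <;> ring
  have hneg : ∫ θ in (-π)..0, g θ = ∫ θ in (0 : ℝ)..π, g (-θ) := by
    rw [intervalIntegral.integral_comp_neg, neg_zero]
  rw [hshift, hrot, ← intervalIntegral.integral_add_adjacent_intervals
    (hgc.intervalIntegrable (-π) 0) (hgc.intervalIntegrable 0 π), hneg,
    ← intervalIntegral.integral_add (Continuous.intervalIntegrable (by fun_prop) 0 π)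
      (hgc.intervalIntegrable 0 π)]
  -- Folding `θ` onto `-θ` cancels the odd part of the exponential.
  have hcos : ∀ θ : ℝ, g (-θ) + g θ = ((2 * Real.cos (z * Real.sin θ) : ℝ) : ℂ) := by
    intro θ
    simp only [hg, Real.sin_neg]
    push_cast
    rw [Complex.two_cos]
    congr 2 <;> ring
  simp only [hcos]
  rw [intervalIntegral.integral_ofReal, intervalIntegral.integral_const_mul, besselJ0]
  congr 1
  field_simp

/-- The Fourier transform of the truncated 2D Green's function
`G_R(x) = -(1/(2π)) log‖x‖` for `‖x‖ ≤ R`: for `κ ≠ 0`,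
`∫_{‖x‖ ≤ R} G_R(x) e^{-i⟨κ,x⟩} dx = (1 - J₀(R‖κ‖))/‖κ‖² - R log(R) J₁(R‖κ‖)/‖κ‖`. -/
theorem fourier_transform_truncated_green_2d
    (R : ℝ) (hR : 0 < R) (κ : EuclideanSpace ℝ (Fin 2)) (hκ : κ ≠ 0) :
    ∫ x in Metric.closedBall (0 : EuclideanSpace ℝ (Fin 2)) R,
        ((-(1 / (2 * π)) * Real.log ‖x‖ : ℝ) : ℂ) * Complex.exp (-Complex.I * (⟪κ, x⟫ : ℝ)) =
      (((1 - besselJ0 (R * ‖κ‖)) / ‖κ‖ ^ 2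
          - R * Real.log R * besselJ1 (R * ‖κ‖) / ‖κ‖ : ℝ) : ℂ) := by
  have hk : ‖κ‖ ≠ 0 := norm_ne_zero_iff.2 hκ
  -- `e` identifies `ℂ` isometrically with the plane; `φ` is the direction of `κ`.
  set e := Complex.orthonormalBasisOneI.repr with he
  set φ : ℝ := Complex.arg (e.symm κ) with hφ
  have hnorm : ‖e.symm κ‖ = ‖κ‖ := e.symm.norm_map κ
  -- The integrand in polar coordinates, Jacobian included. Since `r log r` extends continuously to
  -- `r = 0`, it is continuous everywhere, which settles integrability.
  set g : ℝ × ℝ → ℂ := fun p => ((-(1 / (2 * π)) * (p.1 * Real.log p.1) : ℝ) : ℂ) *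
    Complex.exp (-Complex.I * (‖κ‖ * p.1 * Real.cos (p.2 - φ) : ℝ)) with hg
  have hgc : Continuous g := by
    have h1 : Continuous fun p : ℝ × ℝ => p.1 * Real.log p.1 :=
      Real.continuous_mul_log.comp continuous_fst
    simp only [hg]
    fun_prop
  have hinner : ∀ r θ : ℝ,
      ⟪κ, e (r * (Real.cos θ + Real.sin θ * Complex.I))⟫ = ‖κ‖ * r * Real.cos (θ - φ) := by
    intro r θ
    rw [← e.apply_symm_apply κ, e.inner_map_map, e.norm_map, hnorm, Complex.inner,
      Real.cos_sub, ← hnorm]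
    have h1 := Complex.norm_mul_cos_arg (e.symm κ)
    have h2 := Complex.norm_mul_sin_arg (e.symm κ)
    simp only [Complex.mul_re, Complex.conj_re, Complex.conj_im, Complex.ofReal_re,
      Complex.ofReal_im, Complex.add_re, Complex.add_im, Complex.mul_im, Complex.I_re,
      Complex.I_im]
    rw [← h1, ← h2]
    ring
  have hpolar : ∀ p ∈ Set.Ioi (0 : ℝ) ×ˢ Set.Ioo (-π) π,
      p.1 • (Metric.closedBall (0 : EuclideanSpace ℝ (Fin 2)) R).indicator
        (fun x => ((-(1 / (2 * π)) * Real.log ‖x‖ : ℝ) : ℂ) *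
          Complex.exp (-Complex.I * (⟪κ, x⟫ : ℝ))) (e (Complex.polarCoord.symm p)) =
      (Set.Iic R ×ˢ Set.univ).indicator g p := by
    rintro ⟨r, θ⟩ ⟨hr, -⟩
    have hr' : 0 < r := hr
    have hn : ‖e (Complex.polarCoord.symm (r, θ))‖ = r := by
      rw [e.norm_map, Complex.norm_polarCoord_symm, abs_of_pos hr']
    by_cases hrR : r ≤ R
    · rw [Set.indicator_of_mem (by rwa [mem_closedBall_zero_iff, hn]),
        Set.indicator_of_mem (by simpa using hrR), hn, Complex.polarCoord_symm_apply, hinner,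
        Complex.real_smul]
      simp only [hg]
      push_cast
      ring
    · rw [Set.indicator_of_notMem (by rwa [mem_closedBall_zero_iff, hn]),
        Set.indicator_of_notMem (by simpa using hrR), smul_zero]
  have hset : (Set.Ioi (0 : ℝ) ×ˢ Set.Ioo (-π) π) ∩ (Set.Iic R ×ˢ Set.univ) =
      Set.Ioc 0 R ×ˢ Set.Ioo (-π) π := by
    rw [Set.prod_inter_prod, Set.inter_univ, Set.Ioi_inter_Iic]
  have hint : IntegrableOn g (Set.Ioc 0 R ×ˢ Set.Ioo (-π) π) := by
    refine (hgc.continuousOn.integrableOn_compact (isCompact_Icc.prod isCompact_Icc)).mono_set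
      (Set.prod_mono Set.Ioc_subset_Icc_self Set.Ioo_subset_Icc_self)
  have hang : ∀ r : ℝ, ∫ θ in Set.Ioo (-π) π, g (r, θ) =
      ((-(r * Real.log r) * besselJ0 (‖κ‖ * r) : ℝ) : ℂ) := by
    intro r
    simp only [hg]
    rw [integral_const_mul, ← integral_Ioc_eq_integral_Ioo,
      ← intervalIntegral.integral_of_le (by linarith [Real.pi_pos]),
      integral_exp_cos_eq_besselJ0, ← Complex.ofReal_mul]
    congr 1
    field_simp
  rw [← integral_indicator Metric.isClosed_closedBall.measurableSet,
    ← e.measurePreserving.integral_comp e.toHomeomorph.measurableEmbedding,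
    ← Complex.integral_comp_polarCoord_symm, polarCoord_target,
    setIntegral_congr_fun (measurableSet_Ioi.prod measurableSet_Ioo) hpolar,
    setIntegral_indicator (measurableSet_Iic.prod MeasurableSet.univ), hset,
    Measure.volume_eq_prod, setIntegral_prod g hint]
  simp only [hang]
  rw [← intervalIntegral.integral_of_le hR.le, intervalIntegral.integral_ofReal,
    integral_log_mul_besselJ0 hR hk]
end

section
/- Let R > 0. The Fourier transform formula for the truncated 2D Green's function extends continuously to κ = 0 with the value (R²/4)(1 − 2 log R): lim_{κ → 0, κ > 0} [ (1 − J₀(Rκ))/κ² − R·log(R)·J₁(Rκ)/κ ] = (R²/4)(1 − 2 log R). -/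
/-!
Both Bessel functions are averages over `[0, π]` of a cosine, and low-order Taylor
polynomials in `x sin θ` may be substituted under the integral uniformly in `θ`, since
`|x sin θ| ≤ |x|`. Together with `∫ sin² = π / 2` and `∫ cos = 0` this gives
`J₀(x) = 1 - x² / 4 + O(x⁴)` and `J₁(x) = x / 2 + O(x²)` for `|x| ≤ 1`
(`abs_one_sub_besselJ0_sub_le`, `abs_besselJ1_sub_le`). Inserting `x = R κ`, the difference between
the function and its claimed limit is `O(κ)`, and the limit follows by squeezing.
-/

open MeasureTheory Real Filter Topology

lemma abs_mul_sin_le (x θ : ℝ) : |x * Real.sin θ| ≤ |x| := by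
  rw [abs_mul]
  exact mul_le_of_le_one_right (abs_nonneg x) (Real.abs_sin_le_one θ)

lemma abs_one_sub_besselJ0_sub_le {x : ℝ} (hx : |x| ≤ 1) :
    |1 - besselJ0 x - x ^ 2 / 4| ≤ x ^ 4 := by
  have hint : ∫ θ in (0 : ℝ)..π, (1 - x ^ 2 / 2 * Real.sin θ ^ 2 - Real.cos (x * Real.sin θ))
      = π - x ^ 2 / 2 * (π / 2) - ∫ θ in (0 : ℝ)..π, Real.cos (x * Real.sin θ) := by
    rw [intervalIntegral.integral_sub, intervalIntegral.integral_sub,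
      intervalIntegral.integral_const_mul, integral_sin_sq]
    · simp
    all_goals exact Continuous.intervalIntegrable (by fun_prop) _ _
  have hbound : ‖∫ θ in (0 : ℝ)..π,
      (1 - x ^ 2 / 2 * Real.sin θ ^ 2 - Real.cos (x * Real.sin θ))‖ ≤ x ^ 4 * |π - 0| := by
    refine intervalIntegral.norm_integral_le_of_norm_le_const fun θ _ => ?_
    have h1 := abs_mul_sin_le x θ
    have h2 := Real.cos_bound (h1.trans hx)
    have h3 : |x * Real.sin θ| ^ 4 ≤ |x| ^ 4 := by gcongr
    have h4 : |x| ^ 4 = x ^ 4 := Even.pow_abs (by decide) x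
    have h5 : 0 ≤ x ^ 4 := by positivity
    rw [Real.norm_eq_abs, abs_sub_comm]
    have h6 : Real.cos (x * Real.sin θ) - (1 - x ^ 2 / 2 * Real.sin θ ^ 2)
        = Real.cos (x * Real.sin θ) - (1 - (x * Real.sin θ) ^ 2 / 2) := by ring
    rw [h6]
    linarith
  have heq : 1 - besselJ0 x - x ^ 2 / 4 = (1 / π) * ∫ θ in (0 : ℝ)..π,
      (1 - x ^ 2 / 2 * Real.sin θ ^ 2 - Real.cos (x * Real.sin θ)) := by
    rw [hint, besselJ0]
    field_simp
    ring
  rw [heq, abs_mul, abs_of_pos (by positivity : 0 < 1 / π)]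
  rw [Real.norm_eq_abs, sub_zero, abs_of_pos Real.pi_pos] at hbound
  calc _ ≤ 1 / π * (x ^ 4 * π) := by gcongr
    _ = x ^ 4 := by field_simp

/-- First-order Taylor estimate for `cos` at `θ`, with a constant independent of `θ`. -/
lemma abs_cos_sub_sub_le (θ : ℝ) {s : ℝ} (hs : |s| ≤ 1) :
    |Real.cos (θ - s) - Real.cos θ - s * Real.sin θ| ≤ s ^ 2 := by
  have h0 : 0 ≤ |s| := abs_nonneg s
  have hsq : |s| ^ 2 = s ^ 2 := sq_abs s
  have hc : |Real.cos s - 1| ≤ s ^ 2 / 2 := by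
    rw [abs_sub_comm, abs_of_nonneg (by linarith [Real.cos_le_one s])]
    linarith [Real.one_sub_sq_div_two_le_cos (x := s)]
  have hsin : |Real.sin s - s| ≤ s ^ 2 / 2 := by
    have h1 := Real.sin_bound hs
    have h2 : |Real.sin s - s| ≤ |Real.sin s - (s - s ^ 3 / 6)| + |s ^ 3 / 6| := by
      have := abs_sub (Real.sin s - (s - s ^ 3 / 6)) (s ^ 3 / 6)
      rwa [show Real.sin s - (s - s ^ 3 / 6) - s ^ 3 / 6 = Real.sin s - s by ring] at this
    have h3 : |s ^ 3 / 6| = |s| ^ 3 / 6 := by rw [abs_div, abs_pow]; norm_num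
    have h4 : |s| ^ 5 ≤ |s| ^ 2 := pow_le_pow_of_le_one h0 hs (by norm_num)
    have h5 : |s| ^ 3 ≤ |s| ^ 2 := pow_le_pow_of_le_one h0 hs (by norm_num)
    have h6 : 0 ≤ |s| ^ 2 := by positivity
    linarith
  rw [show Real.cos (θ - s) - Real.cos θ - s * Real.sin θ
      = Real.cos θ * (Real.cos s - 1) + Real.sin θ * (Real.sin s - s) by
    rw [Real.cos_sub]; ring]
  calc _ ≤ |Real.cos θ| * |Real.cos s - 1| + |Real.sin θ| * |Real.sin s - s| := by
        rw [← abs_mul, ← abs_mul]; exact abs_add_le _ _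
    _ ≤ 1 * (s ^ 2 / 2) + 1 * (s ^ 2 / 2) := by
        gcongr
        · exact Real.abs_cos_le_one θ
        · exact Real.abs_sin_le_one θ
    _ = s ^ 2 := by ring

lemma abs_besselJ1_sub_le {x : ℝ} (hx : |x| ≤ 1) : |besselJ1 x - x / 2| ≤ x ^ 2 := by
  have hint : ∫ θ in (0 : ℝ)..π,
      (Real.cos (θ - x * Real.sin θ) - Real.cos θ - x * Real.sin θ ^ 2)
      = (∫ θ in (0 : ℝ)..π, Real.cos (θ - x * Real.sin θ)) - x * (π / 2) := by
    rw [intervalIntegral.integral_sub, intervalIntegral.integral_sub,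
      intervalIntegral.integral_const_mul, integral_sin_sq, integral_cos]
    · simp
    all_goals exact Continuous.intervalIntegrable (by fun_prop) _ _
  have hbound : ‖∫ θ in (0 : ℝ)..π,
      (Real.cos (θ - x * Real.sin θ) - Real.cos θ - x * Real.sin θ ^ 2)‖ ≤ x ^ 2 * |π - 0| := by
    refine intervalIntegral.norm_integral_le_of_norm_le_const fun θ _ => ?_
    have h1 := abs_mul_sin_le x θ
    have h2 := abs_cos_sub_sub_le θ (h1.trans hx)
    rw [Real.norm_eq_abs, show x * Real.sin θ ^ 2 = x * Real.sin θ * Real.sin θ by ring]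
    exact h2.trans (sq_le_sq.mpr h1)
  have heq : besselJ1 x - x / 2 = (1 / π) * ∫ θ in (0 : ℝ)..π,
      (Real.cos (θ - x * Real.sin θ) - Real.cos θ - x * Real.sin θ ^ 2) := by
    rw [hint, besselJ1]
    field_simp
  rw [heq, abs_mul, abs_of_pos (by positivity : 0 < 1 / π)]
  rw [Real.norm_eq_abs, sub_zero, abs_of_pos Real.pi_pos] at hbound
  calc _ ≤ 1 / π * (x ^ 2 * π) := by gcongr
    _ = x ^ 2 := by field_simp

/-- The Fourier transform of the truncated 2D Green's function extends
continuously to `κ = 0` with the value `(R²/4)(1 - 2 log R)`. -/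
theorem limit_fourier_truncated_green_2d (R : ℝ) (hR : 0 < R) :
    Tendsto (fun κ : ℝ =>
        (1 - besselJ0 (R * κ)) / κ ^ 2 - R * Real.log R * besselJ1 (R * κ) / κ)
      (𝓝[>] 0) (𝓝 (R ^ 2 / 4 * (1 - 2 * Real.log R))) := by
  rw [tendsto_iff_norm_sub_tendsto_zero]
  have hlim : Tendsto (fun κ : ℝ => R ^ 4 * κ ^ 2 + |R * Real.log R| * (R ^ 2 * κ))
      (𝓝[>] 0) (𝓝 0) := by
    have hc : Continuous fun κ : ℝ => R ^ 4 * κ ^ 2 + |R * Real.log R| * (R ^ 2 * κ) := by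
      fun_prop
    simpa using (hc.tendsto 0).mono_left nhdsWithin_le_nhds
  refine squeeze_zero' (Eventually.of_forall fun _ => norm_nonneg _) ?_ hlim
  filter_upwards [Ioo_mem_nhdsGT (inv_pos.mpr hR)] with κ hκ
  have hκ0 : 0 < κ := hκ.1
  have hx : |R * κ| ≤ 1 := by
    rw [abs_of_pos (by positivity)]
    calc R * κ ≤ R * R⁻¹ := by gcongr; exact hκ.2.le
      _ = 1 := mul_inv_cancel₀ hR.ne'
  have h0 := abs_one_sub_besselJ0_sub_le hx
  have h1 := abs_besselJ1_sub_le hx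
  have heq : (1 - besselJ0 (R * κ)) / κ ^ 2 - R * Real.log R * besselJ1 (R * κ) / κ
      - R ^ 2 / 4 * (1 - 2 * Real.log R)
      = (1 - besselJ0 (R * κ) - (R * κ) ^ 2 / 4) / κ ^ 2
        - R * Real.log R * ((besselJ1 (R * κ) - R * κ / 2) / κ) := by
    field_simp
    ring
  rw [Real.norm_eq_abs, heq]
  refine (abs_sub _ _).trans ?_
  rw [abs_mul (R * Real.log R), abs_div, abs_div, abs_of_pos hκ0,
    abs_of_pos (by positivity : 0 < κ ^ 2)]
  gcongr
  · rw [div_le_iff₀ (by positivity)]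
    exact h0.trans_eq (by ring)
  · rw [div_le_iff₀ hκ0]
    exact h1.trans_eq (by ring)
end

section
/- Let ξ > 0. For every x ∈ ℝ³ with x ≠ 0, the function φ(x) = erf(ξ‖x‖)/‖x‖ satisfies −Δφ(x) = 4π · ξ³ π^{−3/2} e^{−ξ²‖x‖²}; i.e. the Fourier-space part of the Ewald-decomposed Coulomb potential of a unit point charge solves the Poisson equation with the Gaussian screening function as right-hand side. -/
/-!
The Laplacian of a radial function `y ↦ g ‖y‖` on `ℝ³` away from the origin is computed from
`∂ᵢ(g ‖y‖) = h ‖y‖ * yᵢ` with `h r = g' r / r`, which gives `r * h' r + 3 * h r` at `r = ‖x‖`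
(`laplacian3_radial`). For `g r = erf (ξ r) / r` and `c = 2 ξ / √π` one has
`h r = c e^{-ξ²r²} / r² - erf (ξ r) / r³`; in `r * h' r + 3 * h r` all terms cancel except
`-2 ξ² c e^{-ξ²r²}`, which is minus the Gaussian source term.
-/

open Real

/-- The error function `erf(x) = (2/√π) ∫_0^x e^{-t²} dt`. -/
noncomputable def erf (x : ℝ) : ℝ :=
  (2 / Real.sqrt π) * ∫ t in (0 : ℝ)..x, Real.exp (-t ^ 2)

/-- The Laplacian of `f : ℝ³ → ℝ` at `x`: the sum of the second partial
derivatives along the coordinate directions. -/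
noncomputable def laplacian3 (f : EuclideanSpace ℝ (Fin 3) → ℝ)
    (x : EuclideanSpace ℝ (Fin 3)) : ℝ :=
  ∑ i : Fin 3,
    fderiv ℝ (fun y => fderiv ℝ f y (EuclideanSpace.single i 1)) x (EuclideanSpace.single i 1)

lemma hasDerivAt_erf (x : ℝ) : HasDerivAt erf (2 / √π * Real.exp (-x ^ 2)) x := by
  have hc : Continuous fun t : ℝ => Real.exp (-t ^ 2) := by fun_prop
  exact (hc.integral_hasStrictDerivAt 0 x).hasDerivAt.const_mul _

/-- Gradient of a radial function off the origin: it is `g' / ‖y‖` times `y`. -/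
lemma hasFDerivAt_radial {g : ℝ → ℝ} {g' : ℝ} {y : EuclideanSpace ℝ (Fin 3)} (hy : y ≠ 0)
    (hg : HasDerivAt g g' ‖y‖) :
    HasFDerivAt (fun z : EuclideanSpace ℝ (Fin 3) => g ‖z‖)
      ((g' / ‖y‖) • innerSL ℝ y) y := by
  have hn : ‖y‖ ≠ 0 := norm_ne_zero_iff.mpr hy
  -- The norm is differentiated off the origin as the square root of the squared norm.
  have hs : HasFDerivAt (fun z : EuclideanSpace ℝ (Fin 3) => √(‖z‖ ^ 2)) _ y :=
    (hasStrictFDerivAt_norm_sq y).hasFDerivAt.sqrt (pow_ne_zero 2 hn)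
  simp only [Real.sqrt_sq (norm_nonneg _)] at hs
  refine (hg.comp_hasFDerivAt y hs).congr_fderiv ?_
  ext v
  simp
  field_simp

/-- The radial Laplacian in `ℝ³`, in terms of `h r = g' r / r`. -/
lemma laplacian3_radial {g h : ℝ → ℝ} {h' : ℝ} {x : EuclideanSpace ℝ (Fin 3)} (hx : x ≠ 0)
    (hg : ∀ r, 0 < r → HasDerivAt g (r * h r) r) (hh : HasDerivAt h h' ‖x‖) :
    laplacian3 (fun y => g ‖y‖) x = ‖x‖ * h' + 3 * h ‖x‖ := by
  have hn : ‖x‖ ≠ 0 := norm_ne_zero_iff.mpr hx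
  have key : ∀ i : Fin 3,
      fderiv ℝ (fun y => fderiv ℝ (fun z : EuclideanSpace ℝ (Fin 3) => g ‖z‖) y
        (EuclideanSpace.single i 1)) x (EuclideanSpace.single i 1)
      = h' / ‖x‖ * x i ^ 2 + h ‖x‖ := by
    intro i
    -- The formula for the first partial derivative only holds off the origin, hence near `x`.
    have he : (fun y => fderiv ℝ (fun z : EuclideanSpace ℝ (Fin 3) => g ‖z‖) y
        (EuclideanSpace.single i 1)) =ᶠ[nhds x] fun y => h ‖y‖ * y i := by
      filter_upwards [isOpen_ne.mem_nhds hx] with y hy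
      have hy' : ‖y‖ ≠ 0 := norm_ne_zero_iff.mpr hy
      rw [(hasFDerivAt_radial hy (hg _ (norm_pos_iff.mpr hy))).fderiv]
      simp [EuclideanSpace.inner_single_right, hy']
    have hp : HasFDerivAt (fun y : EuclideanSpace ℝ (Fin 3) => y i)
        (EuclideanSpace.proj i : EuclideanSpace ℝ (Fin 3) →L[ℝ] ℝ) x :=
      (EuclideanSpace.proj i : EuclideanSpace ℝ (Fin 3) →L[ℝ] ℝ).hasFDerivAt
    have hm : HasFDerivAt (fun y : EuclideanSpace ℝ (Fin 3) => h ‖y‖ * y i) _ x :=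
      (hasFDerivAt_radial hx hh).mul hp
    rw [he.fderiv_eq, hm.fderiv]
    simp [EuclideanSpace.inner_single_right]
    ring
  have hsum : ‖x‖ ^ 2 = x 0 ^ 2 + x 1 ^ 2 + x 2 ^ 2 := by
    rw [EuclideanSpace.real_norm_sq_eq, Fin.sum_univ_three]
  rw [laplacian3, Fin.sum_univ_three, key, key, key]
  field_simp
  linear_combination -h' * hsum

/-- For `x ≠ 0`, `φ(x) = erf(ξ‖x‖)/‖x‖` satisfies `-Δφ(x) = 4π ξ³ π^{-3/2} e^{-ξ²‖x‖²}`. -/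
theorem neg_laplacian_erf_potential (ξ : ℝ) (hξ : 0 < ξ)
    (x : EuclideanSpace ℝ (Fin 3)) (hx : x ≠ 0) :
    -laplacian3 (fun y => erf (ξ * ‖y‖) / ‖y‖) x =
      4 * π * (ξ ^ 3 * π ^ (-(3 : ℝ) / 2) * Real.exp (-ξ ^ 2 * ‖x‖ ^ 2)) := by
  have hn : ‖x‖ ≠ 0 := norm_ne_zero_iff.mpr hx
  have herf : ∀ r : ℝ, HasDerivAt (fun r => erf (ξ * r))
      (2 / √π * Real.exp (-ξ ^ 2 * r ^ 2) * ξ) r := by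
    intro r
    refine ((hasDerivAt_erf (ξ * r)).comp r ((hasDerivAt_id r).const_mul ξ)).congr_deriv ?_
    ring_nf
  have hexp : ∀ r : ℝ, HasDerivAt (fun r => Real.exp (-ξ ^ 2 * r ^ 2))
      (Real.exp (-ξ ^ 2 * r ^ 2) * (-ξ ^ 2 * (2 * r))) r := by
    intro r
    refine ((hasDerivAt_pow 2 r).const_mul (-ξ ^ 2)).exp.congr_deriv ?_
    simp
  have hg : ∀ r : ℝ, 0 < r → HasDerivAt (fun r => erf (ξ * r) / r)
      (r * (2 / √π * ξ * Real.exp (-ξ ^ 2 * r ^ 2) / r ^ 2 - erf (ξ * r) / r ^ 3)) r := by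
    intro r hr
    refine ((herf r).div (hasDerivAt_id r) hr.ne').congr_deriv ?_
    simp only [id]
    field_simp
  have hh := (((hexp ‖x‖).const_mul (2 / √π * ξ)).div (hasDerivAt_pow 2 ‖x‖)
    (pow_ne_zero 2 hn)).sub ((herf ‖x‖).div (hasDerivAt_pow 3 ‖x‖) (pow_ne_zero 3 hn))
  have hpi : π * π ^ (-(3 : ℝ) / 2) = 1 / √π := by
    rw [Real.sqrt_eq_rpow, one_div, ← Real.rpow_neg pi_pos.le]
    nth_rewrite 1 [← Real.rpow_one π]
    rw [← Real.rpow_add pi_pos]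
    norm_num
  have hL := laplacian3_radial (g := fun r => erf (ξ * r) / r) hx hg hh
  have hsq : √π ≠ 0 := (Real.sqrt_pos.mpr pi_pos).ne'
  rw [hL, show 4 * π * (ξ ^ 3 * π ^ (-(3 : ℝ) / 2) * Real.exp (-ξ ^ 2 * ‖x‖ ^ 2))
    = 4 * (π * π ^ (-(3 : ℝ) / 2)) * ξ ^ 3 * Real.exp (-ξ ^ 2 * ‖x‖ ^ 2) by ring, hpi]
  generalize Real.exp (-ξ ^ 2 * ‖x‖ ^ 2) = E
  generalize erf (ξ * ‖x‖) = F
  push_cast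
  field_simp
  ring
end

section
/- Let ξ > 0, let k > 0, and let z ∈ ℝ. Then the Fourier integral over the non-periodic direction for a nonzero discrete mode in the doubly periodic Ewald sum has the closed form ∫_ℝ (e^{−(k²+κ²)/(4ξ²)}/(k²+κ²)) e^{iκz} dκ = (π/(2k)) [ e^{kz} erfc(k/(2ξ) + ξz) + e^{−kz} erfc(k/(2ξ) − ξz) ]. -/
/-!
Put `s = 1 / (2ξ)` and regard both sides as functions of `s > 0`. Differentiating the integral in `s`
cancels the denominator `k² + κ²` and leaves the Fourier transform of a Gaussian, so the left-hand
side has derivative `-2 √π exp (-(s² k² + z² / (4 s²)))`. The right-hand side has the same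
derivative, because `exp (± k z)` turns both Gaussians `exp (-(k s ± z / (2 s))²)` into that
exponential. Both sides tend to `0` as `s → ∞`, so they agree.
-/

open MeasureTheory Real

/-- The complementary error function `erfc(x) = 1 - erf(x)`. -/
noncomputable def erfc (x : ℝ) : ℝ := 1 - erf x

open Filter Topology

/-- The integrand of the Fourier integral, in terms of `s = 1 / (2ξ)`. -/
noncomputable def modeIntegrand (k z s κ : ℝ) : ℂ :=
  ((Real.exp (-(s ^ 2 * (k ^ 2 + κ ^ 2))) / (k ^ 2 + κ ^ 2) : ℝ) : ℂ) *
    Complex.exp (Complex.I * (κ * z))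

/-- The closed form of the Fourier integral, in terms of `s = 1 / (2ξ)`. -/
noncomputable def modeClosedForm (k z s : ℝ) : ℝ :=
  π / (2 * k) * (Real.exp (k * z) * erfc (k * s + z / (2 * s)) +
    Real.exp (-(k * z)) * erfc (k * s - z / (2 * s)))

lemma hasDerivAt_erfc (x : ℝ) : HasDerivAt erfc (-(2 / √π * Real.exp (-x ^ 2))) x := by
  have hc : Continuous fun t : ℝ => Real.exp (-t ^ 2) := by fun_prop
  have h := (intervalIntegral.integral_hasDerivAt_right (hc.intervalIntegrable 0 x)
    hc.stronglyMeasurable.stronglyMeasurableAtFilter hc.continuousAt).const_mul (2 / √π)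
  exact h.const_sub 1

lemma tendsto_erfc_atTop : Tendsto erfc atTop (𝓝 0) := by
  have hi : IntegrableOn (fun t : ℝ => Real.exp (-t ^ 2)) (Set.Ioi 0) := by
    simpa using (integrable_exp_neg_mul_sq one_pos).integrableOn (s := Set.Ioi (0 : ℝ))
  have h := intervalIntegral_tendsto_integral_Ioi 0 hi tendsto_id
  have hv : ∫ t in Set.Ioi (0 : ℝ), Real.exp (-t ^ 2) = √π / 2 := by
    simpa using integral_gaussian_Ioi 1
  rw [hv] at h
  have h2 := (h.const_mul (2 / √π)).const_sub 1
  have hp : √π ≠ 0 := by positivity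
  have : 1 - 2 / √π * (√π / 2) = 0 := by field_simp; ring
  rw [this] at h2
  exact h2

lemma norm_cexp_I_mul_real (κ z : ℝ) : ‖Complex.exp (Complex.I * (κ * z))‖ = 1 := by
  rw [mul_comm, ← Complex.ofReal_mul, Complex.norm_exp_ofReal_mul_I]

lemma continuous_modeIntegrand {k : ℝ} (hk : 0 < k) (z s : ℝ) :
    Continuous (modeIntegrand k z s) := by
  unfold modeIntegrand
  have : ∀ κ : ℝ, k ^ 2 + κ ^ 2 ≠ 0 := fun κ => by positivity
  fun_prop (disch := assumption)

/-- A Gaussian bound on the integrand: it gives integrability for `s > 0`, and its prefactor makes the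
integral decay as `s → ∞`. -/
lemma norm_modeIntegrand_le {k : ℝ} (hk : 0 < k) (z s κ : ℝ) :
    ‖modeIntegrand k z s κ‖ ≤
      Real.exp (-(s ^ 2 * k ^ 2)) / k ^ 2 * Real.exp (-s ^ 2 * κ ^ 2) := by
  rw [modeIntegrand, norm_mul, norm_cexp_I_mul_real, mul_one, Complex.norm_real,
    Real.norm_of_nonneg (by positivity), div_mul_eq_mul_div, ← Real.exp_add]
  have : -(s ^ 2 * (k ^ 2 + κ ^ 2)) = -(s ^ 2 * k ^ 2) + -s ^ 2 * κ ^ 2 := by ring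
  rw [this]
  gcongr
  nlinarith [sq_nonneg κ]

/-- The integral of the `s`-derivative of `modeIntegrand`, a Gaussian Fourier transform. -/
lemma integral_exp_neg_sq_mul_fourier (k z : ℝ) {s : ℝ} (hs : 0 < s) :
    ∫ κ : ℝ, ((-(2 * s) * Real.exp (-(s ^ 2 * (k ^ 2 + κ ^ 2))) : ℝ) : ℂ) *
        Complex.exp (Complex.I * (κ * z)) =
      ((-(2 * √π) * Real.exp (-(s ^ 2 * k ^ 2 + z ^ 2 / (4 * s ^ 2))) : ℝ) : ℂ) := by
  have hb : 0 < ((s ^ 2 : ℝ) : ℂ).re := by rw [Complex.ofReal_re]; positivity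
  have h := fourierIntegral_gaussian hb z
  have e1 : ∀ κ : ℝ, ((-(2 * s) * Real.exp (-(s ^ 2 * (k ^ 2 + κ ^ 2))) : ℝ) : ℂ) *
        Complex.exp (Complex.I * (κ * z)) =
      ((-(2 * s) * Real.exp (-(s ^ 2 * k ^ 2)) : ℝ) : ℂ) *
        (Complex.exp (Complex.I * z * κ) * Complex.exp (-((s ^ 2 : ℝ) : ℂ) * κ ^ 2)) := by
    intro κ
    push_cast
    rw [mul_assoc, mul_assoc, ← Complex.exp_add, ← Complex.exp_add, ← Complex.exp_add]
    ring_nf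
  have e2 : ((π : ℂ) / ((s ^ 2 : ℝ) : ℂ)) ^ (1 / 2 : ℂ) = ((√π / s : ℝ) : ℂ) := by
    have : √π / s = (π / s ^ 2) ^ (1 / 2 : ℝ) := by
      rw [← Real.sqrt_eq_rpow, Real.sqrt_div' _ (by positivity), Real.sqrt_sq hs.le]
    rw [this, Complex.ofReal_cpow (by positivity)]
    push_cast
    rfl
  simp_rw [e1]
  rw [integral_const_mul, h, e2]
  have e3 : Complex.exp (-(z : ℂ) ^ 2 / (4 * ((s ^ 2 : ℝ) : ℂ))) =
      ((Real.exp (-(z ^ 2 / (4 * s ^ 2))) : ℝ) : ℂ) := by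
    push_cast
    rw [neg_div]
  rw [e3, ← Complex.ofReal_mul, ← Complex.ofReal_mul, neg_add, Real.exp_add]
  congr 1
  field_simp

lemma hasDerivAt_integral_modeIntegrand {k : ℝ} (hk : 0 < k) (z : ℝ) {s : ℝ} (hs : 0 < s) :
    HasDerivAt (fun s => ∫ κ : ℝ, modeIntegrand k z s κ)
      ((-(2 * √π) * Real.exp (-(s ^ 2 * k ^ 2 + z ^ 2 / (4 * s ^ 2))) : ℝ) : ℂ) s := by
  rw [← integral_exp_neg_sq_mul_fourier k z hs]
  have hgauss : ∀ {a : ℝ}, 0 < a → Integrable fun κ : ℝ => Real.exp (-a ^ 2 * κ ^ 2) :=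
    fun {a} ha => integrable_exp_neg_mul_sq (b := a ^ 2) (by positivity)
  -- For `|t - s| < s / 2` one has `s / 2 < t` and `2 t ≤ 3 s`, whence the dominating function.
  refine (hasDerivAt_integral_of_dominated_loc_of_deriv_le
    (bound := fun κ => 3 * s * Real.exp (-(s / 2) ^ 2 * κ ^ 2))
    (F := fun s κ => modeIntegrand k z s κ)
    (F' := fun s κ => ((-(2 * s) * Real.exp (-(s ^ 2 * (k ^ 2 + κ ^ 2))) : ℝ) : ℂ) *
        Complex.exp (Complex.I * (κ * z)))
    (Metric.ball_mem_nhds s (half_pos hs)) ?_ ?_ ?_ ?_ ?_ ?_).2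
  · exact .of_forall fun t => (continuous_modeIntegrand hk z t).aestronglyMeasurable
  · exact ((hgauss hs).const_mul _).mono' (continuous_modeIntegrand hk z s).aestronglyMeasurable
      (.of_forall (norm_modeIntegrand_le hk z s))
  · exact Continuous.aestronglyMeasurable (by fun_prop)
  · refine .of_forall fun κ t ht => ?_
    rw [Metric.mem_ball, Real.dist_eq, abs_lt] at ht
    have ht1 : s / 2 ≤ t := by linarith
    have ht0 : 0 < t := by linarith
    rw [norm_mul, norm_cexp_I_mul_real, mul_one, Complex.norm_real, norm_mul, norm_neg,
      Real.norm_of_nonneg (by positivity), Real.norm_of_nonneg (by positivity)]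
    have hsq : (s / 2) ^ 2 ≤ t ^ 2 := by gcongr
    gcongr ?_ * Real.exp ?_
    · linarith
    · nlinarith [mul_le_mul_of_nonneg_right hsq (sq_nonneg κ), sq_nonneg (t * k)]
  · exact (hgauss (half_pos hs)).const_mul _
  · refine .of_forall fun κ t _ => ?_
    refine HasDerivAt.mul_const (HasDerivAt.ofReal_comp ?_) _
    have hne : k ^ 2 + κ ^ 2 ≠ 0 := by positivity
    refine (((((hasDerivAt_pow 2 t).mul_const (k ^ 2 + κ ^ 2)).neg).exp).div_const
      (k ^ 2 + κ ^ 2)).congr_deriv ?_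
    simp only [Pi.neg_apply]
    field_simp
    norm_num
    ring

lemma hasDerivAt_modeClosedForm {k : ℝ} (hk : 0 < k) (z : ℝ) {s : ℝ} (hs : 0 < s) :
    HasDerivAt (modeClosedForm k z)
      (-(2 * √π) * Real.exp (-(s ^ 2 * k ^ 2 + z ^ 2 / (4 * s ^ 2)))) s := by
  have hq : HasDerivAt (fun s : ℝ => z / (2 * s)) (-(z / (2 * s ^ 2))) s := by
    refine ((hasDerivAt_const s z).div ((hasDerivAt_id s).const_mul 2)
      (by simpa using hs.ne')).congr_deriv ?_
    simp only [id]
    field_simp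
    ring
  have hl : HasDerivAt (fun s : ℝ => k * s) k s := by
    simpa using (hasDerivAt_id s).const_mul k
  have h1 := ((hasDerivAt_erfc _).comp s (hl.add hq)).const_mul (Real.exp (k * z))
  have h2 := ((hasDerivAt_erfc _).comp s (hl.sub hq)).const_mul (Real.exp (-(k * z)))
  refine ((h1.add h2).const_mul (π / (2 * k))).congr_deriv ?_
  simp only [Pi.add_apply, Pi.sub_apply]
  set E := Real.exp (-(s ^ 2 * k ^ 2 + z ^ 2 / (4 * s ^ 2))) with hE
  have e1 : Real.exp (k * z) * Real.exp (-(k * s + z / (2 * s)) ^ 2) = E := by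
    rw [← Real.exp_add, hE]; congr 1; field_simp; ring
  have e2 : Real.exp (-(k * z)) * Real.exp (-(k * s - z / (2 * s)) ^ 2) = E := by
    rw [← Real.exp_add, hE]; congr 1; field_simp; ring
  have hp : √π * √π = π := Real.mul_self_sqrt pi_pos.le
  have hp0 : √π ≠ 0 := by positivity
  have hpi : π / (2 * k) * (2 / √π) = √π / k := by
    field_simp; rw [pow_two, hp]
  calc _ = -(π / (2 * k) * (2 / √π)) *
        ((Real.exp (k * z) * Real.exp (-(k * s + z / (2 * s)) ^ 2)) * (k + -(z / (2 * s ^ 2))) +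
        (Real.exp (-(k * z)) * Real.exp (-(k * s - z / (2 * s)) ^ 2)) *
          (k - -(z / (2 * s ^ 2)))) := by ring
    _ = _ := by rw [e1, e2, hpi]; field_simp; ring

lemma tendsto_modeClosedForm {k : ℝ} (hk : 0 < k) (z : ℝ) :
    Tendsto (modeClosedForm k z) atTop (𝓝 0) := by
  have hl : Tendsto (fun s : ℝ => k * s) atTop atTop := tendsto_id.const_mul_atTop hk
  have hq : Tendsto (fun s : ℝ => z / (2 * s)) atTop (𝓝 0) :=
    (tendsto_id.const_mul_atTop two_pos).const_div_atTop z
  have h1 := (tendsto_erfc_atTop.comp (hl.atTop_add hq)).const_mul (Real.exp (k * z))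
  have h2 := (tendsto_erfc_atTop.comp (hl.atTop_add hq.neg)).const_mul (Real.exp (-(k * z)))
  have hfun : modeClosedForm k z = fun s => π / (2 * k) *
      (Real.exp (k * z) * erfc (k * s + z / (2 * s)) +
        Real.exp (-(k * z)) * erfc (k * s + -(z / (2 * s)))) := by
    funext s
    rw [modeClosedForm, sub_eq_add_neg]
  rw [hfun]
  simpa [Function.comp_def] using
    (h1.add h2).const_mul (π / (2 * k))

lemma tendsto_integral_modeIntegrand {k : ℝ} (hk : 0 < k) (z : ℝ) :
    Tendsto (fun s => ∫ κ : ℝ, modeIntegrand k z s κ) atTop (𝓝 0) := by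
  have hsq : Tendsto (fun s : ℝ => s ^ 2) atTop atTop := tendsto_pow_atTop two_ne_zero
  have hexp : Tendsto (fun s : ℝ => Real.exp (-(s ^ 2 * k ^ 2)) / k ^ 2) atTop (𝓝 0) := by
    simpa using (Real.tendsto_exp_neg_atTop_nhds_zero.comp
      (hsq.atTop_mul_const (by positivity : 0 < k ^ 2))).div_const (k ^ 2)
  have hlim : Tendsto (fun s : ℝ => Real.exp (-(s ^ 2 * k ^ 2)) / k ^ 2 *
      ∫ κ : ℝ, Real.exp (-1 * κ ^ 2)) atTop (𝓝 0) := by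
    simpa only [zero_mul] using hexp.mul_const (∫ κ : ℝ, Real.exp (-1 * κ ^ 2))
  refine squeeze_zero_norm' ?_ hlim
  filter_upwards [eventually_ge_atTop 1] with s hs
  rw [← integral_const_mul]
  refine norm_integral_le_of_norm_le ((integrable_exp_neg_mul_sq one_pos).const_mul _)
    (.of_forall fun κ => (norm_modeIntegrand_le hk z s κ).trans ?_)
  have : 1 ≤ s ^ 2 := one_le_pow₀ hs
  gcongr

lemma integral_modeIntegrand {k : ℝ} (hk : 0 < k) (z : ℝ) {s : ℝ} (hs : 0 < s) :
    ∫ κ : ℝ, modeIntegrand k z s κ = (modeClosedForm k z s : ℂ) := by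
  let D : ℝ → ℂ := fun s => (∫ κ : ℝ, modeIntegrand k z s κ) - (modeClosedForm k z s : ℂ)
  have hD : ∀ t ∈ Set.Ioi (0 : ℝ), HasDerivAt D 0 t := fun t ht =>
    ((hasDerivAt_integral_modeIntegrand hk z ht).sub
      (hasDerivAt_modeClosedForm hk z ht).ofReal_comp).congr_deriv (sub_self _)
  have hconst : ∀ t ∈ Set.Ioi (0 : ℝ), D t = D s := fun t ht =>
    isOpen_Ioi.is_const_of_deriv_eq_zero isPreconnected_Ioi
      (fun u hu => (hD u hu).differentiableAt.differentiableWithinAt)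
      (fun u hu => (hD u hu).deriv) ht hs
  have hlim : Tendsto D atTop (𝓝 0) := by
    simpa using (tendsto_integral_modeIntegrand hk z).sub
      ((Complex.continuous_ofReal.tendsto 0).comp (tendsto_modeClosedForm hk z))
  have hlim' : Tendsto D atTop (𝓝 (D s)) :=
    tendsto_const_nhds.congr' (by
      filter_upwards [eventually_gt_atTop 0] with t ht using (hconst t ht).symm)
  exact sub_eq_zero.1 (tendsto_nhds_unique hlim' hlim)

/-- For `ξ > 0`, `k > 0` and `z ∈ ℝ`, the Fourier integral over the non-periodic
direction for a nonzero discrete mode in the doubly periodic Ewald sum: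
`∫_ℝ (e^{-(k²+κ²)/(4ξ²)}/(k²+κ²)) e^{iκz} dκ
  = (π/(2k)) [e^{kz} erfc(k/(2ξ)+ξz) + e^{-kz} erfc(k/(2ξ)-ξz)]`. -/
theorem fourier_integral_doubly_periodic_mode (ξ k z : ℝ) (hξ : 0 < ξ) (hk : 0 < k) :
    ∫ κ : ℝ,
        ((Real.exp (-(k ^ 2 + κ ^ 2) / (4 * ξ ^ 2)) / (k ^ 2 + κ ^ 2) : ℝ) : ℂ) *
          Complex.exp (Complex.I * (κ * z)) =
      ((π / (2 * k) *
          (Real.exp (k * z) * erfc (k / (2 * ξ) + ξ * z) +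
            Real.exp (-(k * z)) * erfc (k / (2 * ξ) - ξ * z)) : ℝ) : ℂ) := by
  have h := integral_modeIntegrand hk z (s := 1 / (2 * ξ)) (by positivity)
  have e1 : k * (1 / (2 * ξ)) = k / (2 * ξ) := by ring
  have e2 : z / (2 * (1 / (2 * ξ))) = ξ * z := by field_simp
  rw [modeClosedForm, e1, e2] at h
  rw [← h]
  congr 1
  funext κ
  rw [modeIntegrand]
  have e3 : -(k ^ 2 + κ ^ 2) / (4 * ξ ^ 2) = -((1 / (2 * ξ)) ^ 2 * (k ^ 2 + κ ^ 2)) := by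
    field_simp
    norm_num
  rw [e3]
end

section
/- Let ξ > 0, let k ≠ 0 be real, and let w ∈ ℝ². Then the Fourier integral over the two non-periodic directions for a nonzero discrete mode in the singly periodic Ewald sum has the closed form ∫_{ℝ²} (e^{−(k²+‖κ‖²)/(4ξ²)}/(k²+‖κ‖²)) e^{i⟨κ,w⟩} dκ = π · K₀(k²/(4ξ²), ‖w‖²ξ²), where K₀(a,b) = ∫_1^∞ (e^{−at−b/t}/t) dt is the incomplete modified Bessel function of the second kind. -/
/-!
Write `c = 1 / (4 ξ²)` and `A = k² + ‖κ‖² > 0`. The factor `e^{-cA} / A` is the Laplace integral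
`∫_1^∞ c e^{-cAt} dt`. Inserting it, the double integrand is dominated, for `t > 1`, by
`c e^{-ck²t} · e^{-c‖κ‖²}`, which is a product of integrable functions because `k ≠ 0`
(`integrable_laplace_kernel`), so Fubini applies. The inner integral over `κ ∈ ℝ²` is then the
Fourier transform of a Gaussian of parameter `ct`, namely `(π / (ct)) e^{-‖w‖² / (4ct)}`, and
`1 / (4c) = ξ²` turns the remaining integral over `t` into `π K₀(ck², ‖w‖² ξ²)`.
-/

open MeasureTheory Real
open scoped RealInnerProductSpace

/-- The incomplete modified Bessel function of the second kind,
`K₀(a, b) = ∫_1^∞ (1/t) e^{-at - b/t} dt`. -/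
noncomputable def incompleteK0 (a b : ℝ) : ℝ :=
  ∫ t in Set.Ioi (1 : ℝ), Real.exp (-a * t - b / t) / t

theorem integral_laplace_Ioi_one (c A : ℝ) (hc : 0 < c) (hA : 0 < A) :
    ∫ t in Set.Ioi (1 : ℝ), c * Real.exp (-(c * A) * t) = Real.exp (-(c * A)) / A := by
  rw [integral_const_mul, integral_exp_mul_Ioi (by nlinarith [mul_pos hc hA]) 1]
  field_simp

/-- Joint integrability of the Laplace–Fourier integrand. On `t > 1` the Gaussian factor is largest
at `t = 1`, which separates the variables in the bound. -/
theorem integrable_laplace_kernel (c k : ℝ) (hc : 0 < c) (hk : k ≠ 0)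
    (w : EuclideanSpace ℝ (Fin 2)) :
    Integrable (fun p : EuclideanSpace ℝ (Fin 2) × ℝ =>
        ((c * Real.exp (-(c * (k ^ 2 + ‖p.1‖ ^ 2)) * p.2) : ℝ) : ℂ) *
          Complex.exp (Complex.I * (⟪p.1, w⟫ : ℝ)))
      (volume.prod (volume.restrict (Set.Ioi (1 : ℝ)))) := by
  have hk2 : 0 < k ^ 2 := by positivity
  have h1 : Integrable (fun κ : EuclideanSpace ℝ (Fin 2) => Real.exp (-c * ‖κ‖ ^ 2)) := by
    have := (GaussianFourier.integrable_cexp_neg_mul_sq_norm_add (b := (c : ℂ)) (by simpa using hc)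
      0 (0 : EuclideanSpace ℝ (Fin 2))).norm
    simpa [Complex.norm_exp, ← Complex.ofReal_pow] using this
  have h2 : Integrable (fun t : ℝ => c * Real.exp (-(c * k ^ 2) * t))
      (volume.restrict (Set.Ioi (1 : ℝ))) :=
    (integrableOn_exp_mul_Ioi (by nlinarith [mul_pos hc hk2]) 1).const_mul c
  refine (h1.mul_prod h2).mono' (by fun_prop) ?_
  have hmem : ∀ᵐ p : EuclideanSpace ℝ (Fin 2) × ℝ
      ∂(volume.prod (volume.restrict (Set.Ioi (1 : ℝ)))), 1 < p.2 :=
    Measure.quasiMeasurePreserving_snd.ae (ae_restrict_mem measurableSet_Ioi)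
  filter_upwards [hmem] with p hp
  have hn : ‖Complex.exp (Complex.I * (⟪p.1, w⟫ : ℝ))‖ = 1 := by
    rw [mul_comm]; exact Complex.norm_exp_ofReal_mul_I _
  rw [norm_mul, hn, mul_one, Complex.norm_real, Real.norm_of_nonneg (by positivity),
    mul_left_comm, ← Real.exp_add]
  gcongr
  nlinarith [mul_nonneg (mul_nonneg hc.le (sq_nonneg ‖p.1‖)) (sub_nonneg.2 hp.le)]

theorem integral_gaussian_fourier_plane (b : ℝ) (hb : 0 < b) (w : EuclideanSpace ℝ (Fin 2)) :
    ∫ κ : EuclideanSpace ℝ (Fin 2),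
        ((Real.exp (-b * ‖κ‖ ^ 2) : ℝ) : ℂ) * Complex.exp (Complex.I * (⟪κ, w⟫ : ℝ)) =
      ((π / b * Real.exp (-‖w‖ ^ 2 / (4 * b)) : ℝ) : ℂ) := by
  have h := GaussianFourier.integral_cexp_neg_mul_sq_norm_add (b := (b : ℂ)) (by simpa using hb)
      Complex.I w
  simp only [finrank_euclideanSpace, Fintype.card_fin, Complex.I_sq] at h
  push_cast at h ⊢
  rw [div_self two_ne_zero, Complex.cpow_one, neg_one_mul] at h
  rw [← h]
  refine integral_congr_ae (Filter.Eventually.of_forall fun κ => ?_)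
  simp only [real_inner_comm w κ, Complex.exp_add]

/-- For `ξ > 0`, real `k ≠ 0` and `w ∈ ℝ²`, the Fourier integral over the two
non-periodic directions for a nonzero discrete mode in the singly periodic Ewald
sum: `∫_{ℝ²} (e^{-(k²+‖κ‖²)/(4ξ²)}/(k²+‖κ‖²)) e^{i⟨κ,w⟩} dκ = π K₀(k²/(4ξ²), ‖w‖²ξ²)`. -/
theorem fourier_integral_singly_periodic_mode (ξ k : ℝ) (hξ : 0 < ξ) (hk : k ≠ 0)
    (w : EuclideanSpace ℝ (Fin 2)) :
    ∫ κ : EuclideanSpace ℝ (Fin 2),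
        ((Real.exp (-(k ^ 2 + ‖κ‖ ^ 2) / (4 * ξ ^ 2)) / (k ^ 2 + ‖κ‖ ^ 2) : ℝ) : ℂ) *
          Complex.exp (Complex.I * (⟪κ, w⟫ : ℝ)) =
      ((π * incompleteK0 (k ^ 2 / (4 * ξ ^ 2)) (‖w‖ ^ 2 * ξ ^ 2) : ℝ) : ℂ) := by
  obtain ⟨c, hcdef⟩ : ∃ c : ℝ, c = 1 / (4 * ξ ^ 2) := ⟨_, rfl⟩
  have hc : 0 < c := by rw [hcdef]; positivity
  have hk2 : 0 < k ^ 2 := by positivity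
  calc _ = ∫ κ : EuclideanSpace ℝ (Fin 2), ∫ t in Set.Ioi (1 : ℝ),
        ((c * Real.exp (-(c * (k ^ 2 + ‖κ‖ ^ 2)) * t) : ℝ) : ℂ) *
          Complex.exp (Complex.I * (⟪κ, w⟫ : ℝ)) := by
        refine integral_congr_ae (Filter.Eventually.of_forall fun κ => ?_)
        simp only
        rw [integral_mul_const, integral_complex_ofReal,
          integral_laplace_Ioi_one c _ hc (by positivity)]
        congr 4
        rw [hcdef]; ring
    _ = ∫ t in Set.Ioi (1 : ℝ), ∫ κ : EuclideanSpace ℝ (Fin 2),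
        ((c * Real.exp (-(c * (k ^ 2 + ‖κ‖ ^ 2)) * t) : ℝ) : ℂ) *
          Complex.exp (Complex.I * (⟪κ, w⟫ : ℝ)) :=
        integral_integral_swap (integrable_laplace_kernel c k hc hk w)
    _ = ∫ t in Set.Ioi (1 : ℝ), ((π * (Real.exp (-(k ^ 2 / (4 * ξ ^ 2)) * t -
          ‖w‖ ^ 2 * ξ ^ 2 / t) / t) : ℝ) : ℂ) := by
        refine setIntegral_congr_fun measurableSet_Ioi fun t ht => ?_
        have ht0 : 0 < t := zero_lt_one.trans ht
        have hsplit : ∀ κ : EuclideanSpace ℝ (Fin 2),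
            ((c * Real.exp (-(c * (k ^ 2 + ‖κ‖ ^ 2)) * t) : ℝ) : ℂ) *
              Complex.exp (Complex.I * (⟪κ, w⟫ : ℝ)) =
            ((c * Real.exp (-(c * k ^ 2) * t) : ℝ) : ℂ) *
              (((Real.exp (-(c * t) * ‖κ‖ ^ 2) : ℝ) : ℂ) *
                Complex.exp (Complex.I * (⟪κ, w⟫ : ℝ))) := fun κ => by
          rw [← mul_assoc, ← Complex.ofReal_mul, mul_assoc c, ← Real.exp_add]
          congr 4
          ring
        simp only [hsplit]
        rw [integral_const_mul, integral_gaussian_fourier_plane _ (mul_pos hc ht0),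
          ← Complex.ofReal_mul]
        congr 1
        have e1 : -(k ^ 2 / (4 * ξ ^ 2)) * t - ‖w‖ ^ 2 * ξ ^ 2 / t =
            -(c * k ^ 2) * t + -‖w‖ ^ 2 / (4 * (c * t)) := by
          rw [hcdef]; field_simp; ring
        rw [e1, Real.exp_add]
        field_simp
    _ = _ := by
        rw [integral_complex_ofReal, integral_const_mul, incompleteK0]
end

section
/- Let ξ > 0. For every w ∈ ℝ² with w ≠ 0, the function f(w) = −( log(ξ²‖w‖²) + E₁(ξ²‖w‖²) ), where E₁(x) = ∫_1^∞ (e^{−xt}/t) dt, satisfies −Δf(w) = 4ξ² e^{−ξ²‖w‖²}; i.e. the zero-mode contribution of the singly periodic Ewald sum solves the two-dimensional free-space Poisson equation with Gaussian right-hand side. -/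
/-!
The function is radial: it equals `φ(‖w‖²)` with `φ(s) = -(log(ξ²s) + E₁(ξ²s))`.
Differentiating under the integral sign gives `E₁'(x) = -e^{-x}/x`
(`hasDerivAt_expE1`), so `φ'(s) = ψ(s) := -(1 - e^{-ξ²s})/s`. In the plane the Laplacian of
`φ(‖w‖²)` is `4 (φ'(s) + s φ''(s)) = 4 (s φ'(s))'` at `s = ‖w‖²` (`laplacian2_radial`).
Since `s ψ(s) = -(1 - e^{-ξ²s})` has derivative `-ξ² e^{-ξ²s}`, the claim follows.
-/

open MeasureTheory Real

/-- The exponential integral `E₁(x) = ∫_1^∞ (1/t) e^{-xt} dt`. -/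
noncomputable def expE1 (x : ℝ) : ℝ :=
  ∫ t in Set.Ioi (1 : ℝ), Real.exp (-x * t) / t

/-- The Laplacian of `f : ℝ² → ℝ` at `w`: the sum of the second partial
derivatives along the coordinate directions. -/
noncomputable def laplacian2 (f : EuclideanSpace ℝ (Fin 2) → ℝ)
    (w : EuclideanSpace ℝ (Fin 2)) : ℝ :=
  ∑ i : Fin 2,
    fderiv ℝ (fun y => fderiv ℝ f y (EuclideanSpace.single i 1)) w (EuclideanSpace.single i 1)

/-- Differentiation under the integral sign, with derivatives near `x` dominated by
`e^{-xt/2}`. -/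
lemma hasDerivAt_expE1 {x : ℝ} (hx : 0 < x) :
    HasDerivAt expE1 (-(Real.exp (-x) / x)) x := by
  have hexp : ∀ a : ℝ, 0 < a →
      IntegrableOn (fun t : ℝ => Real.exp (-a * t)) (Set.Ioi 1) := fun a ha =>
    integrableOn_exp_mul_Ioi (by linarith) 1
  have hmeas : ∀ y : ℝ, AEStronglyMeasurable (fun t : ℝ => Real.exp (-y * t) / t)
      (volume.restrict (Set.Ioi 1)) := fun y =>
    (Measurable.div (by fun_prop) measurable_id).aestronglyMeasurable
  have key := hasDerivAt_integral_of_dominated_loc_of_deriv_le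
    (μ := volume.restrict (Set.Ioi (1 : ℝ)))
    (F := fun y t : ℝ => Real.exp (-y * t) / t)
    (F' := fun y t : ℝ => -Real.exp (-y * t))
    (bound := fun t : ℝ => Real.exp (-(x / 2) * t))
    (x₀ := x) (s := Set.Ioi (x / 2))
    (Ioi_mem_nhds (by linarith))
    (Filter.Eventually.of_forall hmeas)
    (by
      refine (hexp x hx).mono' (hmeas x) ?_
      filter_upwards [ae_restrict_mem measurableSet_Ioi] with t ht
      have ht : 1 < t := ht
      rw [Real.norm_of_nonneg (by positivity)]
      exact div_le_self (Real.exp_pos _).le ht.le)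
    (by fun_prop)
    (by
      filter_upwards [ae_restrict_mem measurableSet_Ioi] with t ht y hy
      have ht : 1 < t := ht
      have hy : x / 2 < y := hy
      rw [norm_neg, Real.norm_of_nonneg (Real.exp_pos _).le]
      apply Real.exp_le_exp.2
      nlinarith)
    (hexp _ (by linarith))
    (by
      filter_upwards [ae_restrict_mem measurableSet_Ioi] with t ht y _
      have ht : 1 < t := ht
      have h1 : HasDerivAt (fun y : ℝ => -y * t) (-1 * t) y :=
        (hasDerivAt_id y).neg.mul_const t
      have h2 := (h1.exp).div_const t
      refine h2.congr_deriv ?_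
      field_simp)
  have h := key.2
  rw [integral_neg, integral_exp_mul_Ioi (by linarith : -x < 0) 1] at h
  refine h.congr_deriv ?_
  simp [neg_div_neg_eq]

/-- The polar form of the Laplacian in the plane, in the variable `s = ‖w‖²`:
`Δ (φ(‖w‖²)) = 4 (φ'(s) + s φ''(s))`. -/
lemma laplacian2_radial {φ ψ : ℝ → ℝ} {ψ' : ℝ} {w : EuclideanSpace ℝ (Fin 2)} (hw : w ≠ 0)
    (hφ : ∀ s, 0 < s → HasDerivAt φ (ψ s) s) (hψ : HasDerivAt ψ ψ' (‖w‖ ^ 2)) :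
    laplacian2 (fun y => φ (‖y‖ ^ 2)) w = 4 * (ψ (‖w‖ ^ 2) + ‖w‖ ^ 2 * ψ') := by
  have hsq : ∀ y : EuclideanSpace ℝ (Fin 2),
      HasFDerivAt (fun y : EuclideanSpace ℝ (Fin 2) => ‖y‖ ^ 2) (2 • innerSL ℝ y) y :=
    fun y => (hasStrictFDerivAt_norm_sq y).hasFDerivAt
  have hinner : ∀ (y : EuclideanSpace ℝ (Fin 2)) (i : Fin 2),
      inner ℝ y (EuclideanSpace.single i 1) = y i := fun y i => by
    simp [EuclideanSpace.inner_single_right]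
  have hpart : ∀ i : Fin 2,
      fderiv ℝ (fun y => fderiv ℝ (fun y : EuclideanSpace ℝ (Fin 2) => φ (‖y‖ ^ 2)) y
        (EuclideanSpace.single i 1)) w (EuclideanSpace.single i 1)
        = 2 * ψ (‖w‖ ^ 2) + 4 * ψ' * w i ^ 2 := by
    intro i
    -- The first-order formula holds only off the origin, hence near `w`.
    have hev : (fun y => fderiv ℝ (fun y : EuclideanSpace ℝ (Fin 2) => φ (‖y‖ ^ 2)) y
        (EuclideanSpace.single i 1)) =ᶠ[nhds w] fun y => ψ (‖y‖ ^ 2) * (2 * y i) := by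
      filter_upwards [isOpen_ne.mem_nhds hw] with y hy
      have hy' : 0 < ‖y‖ ^ 2 := by have := norm_pos_iff.2 hy; positivity
      have h := (hφ _ hy').comp_hasFDerivAt y (hsq y)
      have h' : fderiv ℝ (fun y : EuclideanSpace ℝ (Fin 2) => φ (‖y‖ ^ 2)) y = _ := h.fderiv
      rw [h']
      simp [hinner]
    have h1 := hψ.comp_hasFDerivAt w (hsq w)
    have h2 : HasFDerivAt (fun y : EuclideanSpace ℝ (Fin 2) => 2 * y i)
        ((2 : ℝ) • (EuclideanSpace.proj i : EuclideanSpace ℝ (Fin 2) →L[ℝ] ℝ)) w :=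
      (EuclideanSpace.proj i : EuclideanSpace ℝ (Fin 2) →L[ℝ] ℝ).hasFDerivAt.const_mul 2
    have h3 : fderiv ℝ (fun y : EuclideanSpace ℝ (Fin 2) => ψ (‖y‖ ^ 2) * (2 * y i)) w = _ :=
      (h1.mul h2).fderiv
    rw [hev.fderiv_eq, h3]
    simp [hinner]
    ring
  have hnorm : ‖w‖ ^ 2 = w 0 ^ 2 + w 1 ^ 2 := by
    simp [EuclideanSpace.norm_sq_eq, Fin.sum_univ_two]
  rw [laplacian2, Fin.sum_univ_two, hpart, hpart]
  linear_combination (-4 * ψ') * hnorm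

/-- For `w ≠ 0`, the zero-mode contribution of the singly periodic Ewald sum
`f(w) = -(log(ξ²‖w‖²) + E₁(ξ²‖w‖²))` satisfies `-Δf(w) = 4ξ² e^{-ξ²‖w‖²}`. -/
theorem neg_laplacian_singly_periodic_zero_mode (ξ : ℝ) (hξ : 0 < ξ)
    (w : EuclideanSpace ℝ (Fin 2)) (hw : w ≠ 0) :
    -laplacian2 (fun y => -(Real.log (ξ ^ 2 * ‖y‖ ^ 2) + expE1 (ξ ^ 2 * ‖y‖ ^ 2))) w =
      4 * ξ ^ 2 * Real.exp (-ξ ^ 2 * ‖w‖ ^ 2) := by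
  have hs : 0 < ‖w‖ ^ 2 := by have := norm_pos_iff.2 hw; positivity
  have hlin : ∀ s : ℝ, HasDerivAt (fun s : ℝ => ξ ^ 2 * s) (ξ ^ 2) s := fun s => by
    simpa using (hasDerivAt_id s).const_mul (ξ ^ 2)
  have hφ : ∀ s : ℝ, 0 < s →
      HasDerivAt (fun s : ℝ => -(Real.log (ξ ^ 2 * s) + expE1 (ξ ^ 2 * s)))
        (-(1 - Real.exp (-(ξ ^ 2 * s))) / s) s := by
    intro s hs
    have hpos : 0 < ξ ^ 2 * s := by positivity
    have h1 := (hlin s).log hpos.ne'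
    have h2 := (hasDerivAt_expE1 hpos).comp s (hlin s)
    refine (h1.add h2).neg.congr_deriv ?_
    field_simp
    ring
  have hψ := ((((hlin (‖w‖ ^ 2)).neg.exp).const_sub 1).neg).div
    (hasDerivAt_id (‖w‖ ^ 2)) hs.ne'
  have h := laplacian2_radial (ψ := fun s => -(1 - Real.exp (-(ξ ^ 2 * s))) / s) hw hφ hψ
  rw [h, neg_mul (ξ ^ 2)]
  simp only [id, Pi.neg_apply]
  field_simp
  ring
end
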